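/- For every ν ≥ 0, ξ > 0 and k ∈ ℕ, the k-th eigenvalue λ_{ξ,k} of the Friedrichs extension G_ξ of -∂ₓ² + ξ²x² + (ν²-1/4)/x² on (0,1) satisfies λ_{ξ,k}/ξ > 4k + 2(1+ν). -/

import Mathlib

open MeasureTheory Set Filter

/-- `E` is an eigenvalue of the Friedrichs extension `G_ξ` of
`-∂ₓ² + ξ²x² + (ν²-1/4)/x²` on `(0,1)`: there is a nonzero solution of the eigenvalue
ODE on `(0,1)` vanishing at both endpoints and with finite energy form
`∫₀¹ f'² + (ξ²x² + (ν²-1/4)/x²) f²`. -/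
def IsEigenvalueGxi (ν ξ E : ℝ) : Prop :=
  ∃ f : ℝ → ℝ, (∃ x ∈ Ioo (0:ℝ) 1, f x ≠ 0) ∧
    (∀ x ∈ Ioo (0:ℝ) 1, DifferentiableAt ℝ f x) ∧
    (∀ x ∈ Ioo (0:ℝ) 1, DifferentiableAt ℝ (deriv f) x) ∧
    (∀ x ∈ Ioo (0:ℝ) 1,
      -(deriv (deriv f) x) + ξ ^ 2 * x ^ 2 * f x + (ν ^ 2 - 1/4) / x ^ 2 * f x = E * f x) ∧
    Tendsto f (nhdsWithin 0 (Ioo 0 1)) (nhds 0) ∧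
    Tendsto f (nhdsWithin 1 (Ioo 0 1)) (nhds 0) ∧
    IntegrableOn
      (fun x => (deriv f x) ^ 2 + (ξ ^ 2 * x ^ 2 + (ν ^ 2 - 1/4) / x ^ 2) * (f x) ^ 2)
      (Ioo (0:ℝ) 1)

/-- A function, given together with its derivative, solving the Schrödinger equation with
potential `V` at energy `E` on the open interval `(a, b)`. -/
structure IsSchrodingerSol (V : ℝ → ℝ) (E a b : ℝ) (f f' : ℝ → ℝ) : Prop where
  hasDerivAt : ∀ x ∈ Ioo a b, HasDerivAt f (f' x) x
  hasDerivAt_deriv : ∀ x ∈ Ioo a b, HasDerivAt f' ((V x - E) * f x) x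

namespace IsSchrodingerSol

variable {V : ℝ → ℝ} {E F a b : ℝ} {f f' u u' : ℝ → ℝ}

theorem neg (h : IsSchrodingerSol V E a b f f') :
    IsSchrodingerSol V E a b (fun x => -f x) (fun x => -f' x) where
  hasDerivAt x hx := (h.hasDerivAt x hx).neg
  hasDerivAt_deriv x hx := by
    refine HasDerivAt.congr_deriv ((h.hasDerivAt_deriv x hx).neg) ?_
    ring

theorem mono (h : IsSchrodingerSol V E a b f f') {c d : ℝ} (hac : a ≤ c) (hdb : d ≤ b) :
    IsSchrodingerSol V E c d f f' where
  hasDerivAt x hx := h.hasDerivAt x ⟨hac.trans_lt hx.1, hx.2.trans_le hdb⟩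
  hasDerivAt_deriv x hx := h.hasDerivAt_deriv x ⟨hac.trans_lt hx.1, hx.2.trans_le hdb⟩

theorem comp_neg (h : IsSchrodingerSol V E a b f f') :
    IsSchrodingerSol (fun x => V (-x)) E (-b) (-a) (fun x => f (-x)) (fun x => -f' (-x)) where
  hasDerivAt x hx := by
    have hx' : -x ∈ Ioo a b := ⟨by linarith [hx.2], by linarith [hx.1]⟩
    refine HasDerivAt.congr_deriv ((h.hasDerivAt (-x) hx').comp x (hasDerivAt_neg x)) ?_
    ring
  hasDerivAt_deriv x hx := by
    have hx' : -x ∈ Ioo a b := ⟨by linarith [hx.2], by linarith [hx.1]⟩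
    refine HasDerivAt.congr_deriv (((h.hasDerivAt_deriv (-x) hx').comp x (hasDerivAt_neg x)).neg) ?_
    ring

theorem hasDerivAt_wronskian (hf : IsSchrodingerSol V E a b f f')
    (hu : IsSchrodingerSol V F a b u u') {x : ℝ} (hx : x ∈ Ioo a b) :
    HasDerivAt (fun x => f x * u' x - f' x * u x) ((E - F) * (f x * u x)) x := by
  refine HasDerivAt.congr_deriv (((hf.hasDerivAt x hx).mul (hu.hasDerivAt_deriv x hx)).sub
    ((hf.hasDerivAt_deriv x hx).mul (hu.hasDerivAt x hx))) ?_
  ring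

end IsSchrodingerSol

theorem monotoneOn_of_hasDerivAt_nonneg {D : Set ℝ} (hD : Convex ℝ D) {g g' : ℝ → ℝ}
    (hg : ∀ x ∈ D, HasDerivAt g (g' x) x) (hg' : ∀ x ∈ D, 0 ≤ g' x) : MonotoneOn g D :=
  monotoneOn_of_deriv_nonneg hD (fun x hx => (hg x hx).continuousAt.continuousWithinAt)
    (fun x hx => (hg x (interior_subset hx)).differentiableAt.differentiableWithinAt)
    (fun x hx => (hg x (interior_subset hx)).deriv ▸ hg' x (interior_subset hx))

theorem antitoneOn_of_hasDerivAt_nonpos {D : Set ℝ} (hD : Convex ℝ D) {g g' : ℝ → ℝ}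
    (hg : ∀ x ∈ D, HasDerivAt g (g' x) x) (hg' : ∀ x ∈ D, g' x ≤ 0) : AntitoneOn g D :=
  antitoneOn_of_deriv_nonpos hD (fun x hx => (hg x hx).continuousAt.continuousWithinAt)
    (fun x hx => (hg x (interior_subset hx)).differentiableAt.differentiableWithinAt)
    (fun x hx => (hg x (interior_subset hx)).deriv ▸ hg' x (interior_subset hx))

namespace IsSchrodingerSol

variable {V f f' u u' : ℝ → ℝ} {E F a b M : ℝ}

/-- If `f² = O(x - a)`, then `f` is principal at `a`: the Wronskian of `f` with a positive
solution at a higher energy is nonpositive. -/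
theorem wronskian_nonpos (hf : IsSchrodingerSol V E a b f f')
    (hu : IsSchrodingerSol V F a b u u') (hEF : E ≤ F)
    (hfpos : ∀ x ∈ Ioo a b, 0 < f x) (hupos : ∀ x ∈ Ioo a b, 0 < u x)
    (hfM : ∀ x ∈ Ioo a b, f x ^ 2 ≤ M * (x - a)) :
    ∀ x ∈ Ioo a b, f x * u' x - f' x * u x ≤ 0 := by
  intro y hy
  by_contra! hc
  set c := f y * u' y - f' y * u y with hcdef
  have hanti : AntitoneOn (fun x => f x * u' x - f' x * u x) (Ioo a b) :=
    antitoneOn_of_hasDerivAt_nonpos (convex_Ioo a b)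
      (fun x hx => hf.hasDerivAt_wronskian hu hx)
      (fun x hx => mul_nonpos_of_nonpos_of_nonneg (by linarith)
        (mul_pos (hfpos x hx) (hupos x hx)).le)
  have hM : 0 < M := by
    have h1 := hfM y hy
    have h2 := pow_pos (hfpos y hy) 2
    have h3 : 0 < y - a := by linarith [hy.1]
    by_contra! h
    nlinarith
  have hsub : ∀ x ∈ Ioc a y, x ∈ Ioo a b := fun x hx => ⟨hx.1, hx.2.trans_lt hy.2⟩
  have hmono : MonotoneOn (fun x => u x / f x - c / M * Real.log (x - a)) (Ioc a y) := by
    refine monotoneOn_of_hasDerivAt_nonneg (convex_Ioc a y)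
      (g' := fun x => (u' x * f x - u x * f' x) / f x ^ 2 - c / M * (1 / (x - a))) ?_ ?_
    · intro x hx
      have hx' := hsub x hx
      have hxa : x - a ≠ 0 := by linarith [hx.1, sub_pos.2 hx.1] |> ne_of_gt
      exact ((hu.hasDerivAt x hx').div (hf.hasDerivAt x hx') (hfpos x hx').ne').sub
        ((((hasDerivAt_id x).sub_const a).log hxa).const_mul (c / M))
    · intro x hx
      have hx' := hsub x hx
      have hxa : 0 < x - a := sub_pos.2 hx.1
      have h1 : c ≤ f x * u' x - f' x * u x := hanti hx' hy hx.2
      have h2 : c / M * (1 / (x - a)) = c / (M * (x - a)) := by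
        field_simp
      rw [h2, sub_nonneg]
      exact div_le_div₀ (by linarith) (by linarith) (pow_pos (hfpos x hx') 2) (hfM x hx')
  set G := u y / f y - c / M * Real.log (y - a) with hG
  set δ := min (Real.exp (-(G * M / c))) (y - a) with hδ
  have hya : 0 < y - a := sub_pos.2 hy.1
  have hδpos : 0 < δ := lt_min (Real.exp_pos _) hya
  have hx : a + δ ∈ Ioc a y :=
    ⟨by linarith, by linarith [min_le_right (Real.exp (-(G * M / c))) (y - a)]⟩
  have h1 : u (a + δ) / f (a + δ) - c / M * Real.log (a + δ - a) ≤ G :=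
    hmono hx ⟨hy.1, le_rfl⟩ hx.2
  have h2 : 0 < u (a + δ) / f (a + δ) := div_pos (hupos _ (hsub _ hx)) (hfpos _ (hsub _ hx))
  have h3 : Real.log δ ≤ -(G * M / c) := by
    rw [Real.log_le_iff_le_exp hδpos]
    exact min_le_left _ _
  have h4 : c / M * Real.log δ ≤ c / M * (-(G * M / c)) :=
    mul_le_mul_of_nonneg_left h3 (div_pos hc hM).le
  have h5 : c / M * (-(G * M / c)) = -G := by
    field_simp
  rw [add_sub_cancel_left] at h1
  linarith

theorem wronskian_eq_zero_of_pos (hf : IsSchrodingerSol V E a b f f')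
    (hu : IsSchrodingerSol V F a b u u') (hEF : E ≤ F)
    (hfpos : ∀ x ∈ Ioo a b, 0 < f x) (hupos : ∀ x ∈ Ioo a b, 0 < u x)
    (hfa : ∀ x ∈ Ioo a b, f x ^ 2 ≤ M * (x - a))
    (hfb : ∀ x ∈ Ioo a b, f x ^ 2 ≤ M * (b - x)) :
    ∀ x ∈ Ioo a b, f x * u' x - f' x * u x = 0 := by
  intro x hx
  refine le_antisymm (hf.wronskian_nonpos hu hEF hfpos hupos hfa x hx) ?_
  have key : ∀ y ∈ Ioo (-b) (-a), -y ∈ Ioo a b :=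
    fun y hy => ⟨by linarith [hy.2], by linarith [hy.1]⟩
  have h := hf.comp_neg.wronskian_nonpos (M := M) hu.comp_neg hEF
    (fun y hy => hfpos _ (key y hy)) (fun y hy => hupos _ (key y hy))
    (fun y hy => (hfb _ (key y hy)).trans_eq (by ring)) (-x)
    ⟨by linarith [hx.2], by linarith [hx.1]⟩
  simp only [neg_neg] at h
  linarith

theorem wronskian_eq_zero (hf : IsSchrodingerSol V E a b f f')
    (hu : IsSchrodingerSol V F a b u u') (hEF : E ≤ F)
    (hf0 : ∀ x ∈ Ioo a b, f x ≠ 0) (hu0 : ∀ x ∈ Ioo a b, u x ≠ 0)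
    (hfa : ∀ x ∈ Ioo a b, f x ^ 2 ≤ M * (x - a))
    (hfb : ∀ x ∈ Ioo a b, f x ^ 2 ≤ M * (b - x)) :
    ∀ x ∈ Ioo a b, f x * u' x - f' x * u x = 0 := by
  have sign : ∀ g : ℝ → ℝ, ContinuousOn g (Ioo a b) → (∀ x ∈ Ioo a b, g x ≠ 0) →
      (∀ x ∈ Ioo a b, 0 < g x) ∨ (∀ x ∈ Ioo a b, 0 < -g x) := by
    intro g hg hg0
    by_contra! h
    obtain ⟨⟨x, hx, hgx⟩, ⟨y, hy, hgy⟩⟩ := h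
    obtain ⟨z, hz, hgz⟩ := isPreconnected_Ioo.intermediate_value hx hy hg
      (show (0 : ℝ) ∈ Icc (g x) (g y) from ⟨hgx, by linarith⟩)
    exact hg0 z hz hgz
  intro x hx
  rcases sign f (fun x hx => (hf.hasDerivAt x hx).continuousAt.continuousWithinAt) hf0 with h1 | h1
    <;> rcases sign u (fun x hx => (hu.hasDerivAt x hx).continuousAt.continuousWithinAt) hu0
      with h2 | h2
  · exact hf.wronskian_eq_zero_of_pos hu hEF h1 h2 hfa hfb x hx
  · linarith [hf.wronskian_eq_zero_of_pos hu.neg hEF h1 h2 hfa hfb x hx]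
  · linarith [hf.neg.wronskian_eq_zero_of_pos (M := M) hu hEF h1 h2
      (by simpa using hfa) (by simpa using hfb) x hx]
  · linarith [hf.neg.wronskian_eq_zero_of_pos (M := M) hu.neg hEF h1 h2
      (by simpa using hfa) (by simpa using hfb) x hx]

/-- Sturm comparison, strict version. -/
theorem exists_zero_Ioo_of_lt (hf : IsSchrodingerSol V E a b f f')
    (hu : IsSchrodingerSol V F a b u u') (hab : a < b) (hEF : E < F)
    (hf0 : ∀ x ∈ Ioo a b, f x ≠ 0)
    (hfa : ∀ x ∈ Ioo a b, f x ^ 2 ≤ M * (x - a))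
    (hfb : ∀ x ∈ Ioo a b, f x ^ 2 ≤ M * (b - x)) :
    ∃ x ∈ Ioo a b, u x = 0 := by
  by_contra! hu0
  have hW := hf.wronskian_eq_zero hu hEF.le hf0 hu0 hfa hfb
  obtain ⟨x, hx⟩ := exists_between hab
  have h1 := hf.hasDerivAt_wronskian hu hx
  have h2 : HasDerivAt (fun x => f x * u' x - f' x * u x) 0 x :=
    (hasDerivAt_const x (0 : ℝ)).congr_of_eventuallyEq
      (by filter_upwards [isOpen_Ioo.mem_nhds hx] with y hy using hW y hy)
  have h3 := h1.unique h2
  exact mul_ne_zero (sub_ne_zero.2 hEF.ne) (mul_ne_zero (hf0 x hx) (hu0 x hx)) h3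

/-- Sturm comparison, including the case of equal energies. -/
theorem exists_zero_Ioc (hf : IsSchrodingerSol V E a b f f')
    (hu : IsSchrodingerSol V F a b u u') (hab : a < b) (hEF : E ≤ F)
    (hf0 : ∀ x ∈ Ioo a b, f x ≠ 0)
    (hfa : ∀ x ∈ Ioo a b, f x ^ 2 ≤ M * (x - a))
    (hfb : ∀ x ∈ Ioo a b, f x ^ 2 ≤ M * (b - x)) (hub : ContinuousAt u b) :
    ∃ x ∈ Ioc a b, u x = 0 := by
  by_contra! hu0
  have hu1 : ∀ x ∈ Ioo a b, u x ≠ 0 := fun x hx => hu0 x ⟨hx.1, hx.2.le⟩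
  have hW := hf.wronskian_eq_zero hu hEF hf0 hu1 hfa hfb
  obtain ⟨p, hp⟩ := exists_between hab
  have hd : ∀ x ∈ Ioo a b, HasDerivAt (fun x => u x / f x) 0 x := fun x hx => by
    refine HasDerivAt.congr_deriv ((hu.hasDerivAt x hx).div (hf.hasDerivAt x hx) (hf0 x hx)) ?_
    rw [div_eq_zero_iff]
    left
    linarith [hW x hx]
  have hconst : ∀ x ∈ Ioo a b, u x = u p / f p * f x := fun x hx => by
    have h1 := monotoneOn_of_hasDerivAt_nonneg (convex_Ioo a b) hd (fun _ _ => le_rfl)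
    have h2 := antitoneOn_of_hasDerivAt_nonpos (convex_Ioo a b) hd (fun _ _ => le_rfl)
    have h3 : u x / f x = u p / f p := by
      rcases le_total x p with h | h
      · exact le_antisymm (h1 hx hp h) (h2 hx hp h)
      · exact le_antisymm (h2 hp hx h) (h1 hp hx h)
    rw [← h3, div_mul_cancel₀ _ (hf0 x hx)]
  have hlim : Tendsto (fun x => u x ^ 2) (nhdsWithin b (Ioo a b)) (nhds (u b ^ 2)) :=
    (hub.tendsto.mono_left nhdsWithin_le_nhds).pow 2
  have hlim' : Tendsto (fun x => (u p / f p) ^ 2 * (M * (b - x))) (nhdsWithin b (Ioo a b))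
      (nhds 0) := by
    have : Continuous fun x => (u p / f p) ^ 2 * (M * (b - x)) := by fun_prop
    have h := (this.tendsto b).mono_left (nhdsWithin_le_nhds (s := Ioo a b))
    simpa using h
  have : (nhdsWithin b (Ioo a b)).NeBot := by
    rw [nhdsWithin_Ioo_eq_nhdsLT hab]; infer_instance
  have hle : u b ^ 2 ≤ 0 := by
    refine le_of_tendsto_of_tendsto hlim hlim' ?_
    filter_upwards [self_mem_nhdsWithin] with x hx
    rw [hconst x hx, mul_pow]
    exact mul_le_mul_of_nonneg_left (hfb x hx) (sq_nonneg _)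
  exact hu0 b ⟨hab, le_rfl⟩ (pow_eq_zero_iff two_ne_zero |>.1 (le_antisymm hle (sq_nonneg _)))

/-- Unique continuation. -/
theorem eq_zero_of_initial (hf : IsSchrodingerSol V E a b f f') (hV : ContinuousOn V (Ioo a b))
    {p : ℝ} (hp : p ∈ Ioo a b) (h0 : f p = 0) (h0' : f' p = 0) : ∀ x ∈ Ioo a b, f x = 0 := by
  intro x hx
  have hsub : Icc (min p x) (max p x) ⊆ Ioo a b := fun y hy =>
    ⟨(lt_min hp.1 hx.1).trans_le hy.1, hy.2.trans_lt (max_lt hp.2 hx.2)⟩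
  obtain ⟨K, hK⟩ := isCompact_Icc.exists_bound_of_continuousOn
    (((hV.sub continuousOn_const).add continuousOn_const).mono hsub : ContinuousOn
      (fun y => V y - E + 1) (Icc (min p x) (max p x)))
  have hder : ∀ L : ℝ, ∀ y ∈ Icc (min p x) (max p x),
      HasDerivAt (fun y => (f y ^ 2 + f' y ^ 2) * Real.exp (L * y))
        ((2 * f y * f' y * (V y - E + 1) + L * (f y ^ 2 + f' y ^ 2)) * Real.exp (L * y)) y := by
    intro L y hy
    refine HasDerivAt.congr_deriv ((((hf.hasDerivAt y (hsub hy)).pow 2).add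
      ((hf.hasDerivAt_deriv y (hsub hy)).pow 2)).mul
      (((hasDerivAt_id y).const_mul L).exp)) ?_
    simp only [Pi.add_apply, Pi.pow_apply, id]
    push_cast
    ring
  have hbd : ∀ y ∈ Icc (min p x) (max p x),
      |2 * f y * f' y * (V y - E + 1)| ≤ K * (f y ^ 2 + f' y ^ 2) := by
    intro y hy
    have h1 := hK y hy
    rw [Real.norm_eq_abs] at h1
    rw [abs_mul, mul_comm]
    refine mul_le_mul h1 ?_ (abs_nonneg _) ((abs_nonneg _).trans h1)
    rw [abs_le]
    constructor <;> nlinarith [sq_nonneg (f y + f' y), sq_nonneg (f y - f' y)]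
  have hpm : p ∈ Icc (min p x) (max p x) := ⟨min_le_left _ _, le_max_left _ _⟩
  have hxm : x ∈ Icc (min p x) (max p x) := ⟨min_le_right _ _, le_max_right _ _⟩
  have key : ∃ L : ℝ, (f x ^ 2 + f' x ^ 2) * Real.exp (L * x) ≤ 0 := by
    rcases le_total x p with h | h
    · refine ⟨K, ?_⟩
      have := monotoneOn_of_hasDerivAt_nonneg (convex_Icc _ _) (hder K) (fun y hy =>
        mul_nonneg (by linarith [(abs_le.1 (hbd y hy)).1]) (Real.exp_pos _).le) hxm hpm h
      simpa [h0, h0'] using this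
    · refine ⟨-K, ?_⟩
      have := antitoneOn_of_hasDerivAt_nonpos (convex_Icc _ _) (hder (-K)) (fun y hy =>
        mul_nonpos_of_nonpos_of_nonneg (by linarith [(abs_le.1 (hbd y hy)).2])
          (Real.exp_pos _).le) hpm hxm h
      simpa [h0, h0'] using this
  obtain ⟨L, hL⟩ := key
  have h1 : f x ^ 2 + f' x ^ 2 ≤ 0 := by
    by_contra! h
    exact absurd (mul_pos h (Real.exp_pos (L * x))) (not_lt.2 hL)
  nlinarith [sq_nonneg (f x), sq_nonneg (f' x)]

end IsSchrodingerSol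

theorem exists_consecutive_zeros {f : ℝ → ℝ} {a b x : ℝ} (hf : ContinuousOn f (Icc a b))
    (ha : f a = 0) (hb : f b = 0) (hx : x ∈ Ioo a b) (hfx : f x ≠ 0) :
    ∃ c d, a ≤ c ∧ c < d ∧ d ≤ b ∧ f c = 0 ∧ f d = 0 ∧ ∀ y ∈ Ioo c d, f y ≠ 0 := by
  have hc : IsCompact (Icc a x ∩ f ⁻¹' {0}) := isCompact_Icc.of_isClosed_subset
    ((hf.mono (Icc_subset_Icc_right hx.2.le)).preimage_isClosed_of_isClosed isClosed_Icc
      isClosed_singleton) inter_subset_left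
  have hd : IsCompact (Icc x b ∩ f ⁻¹' {0}) := isCompact_Icc.of_isClosed_subset
    ((hf.mono (Icc_subset_Icc_left hx.1.le)).preimage_isClosed_of_isClosed isClosed_Icc
      isClosed_singleton) inter_subset_left
  obtain ⟨c, ⟨hc1, hc2⟩, hc3⟩ := hc.exists_isGreatest ⟨a, ⟨le_rfl, hx.1.le⟩, ha⟩
  obtain ⟨d, ⟨hd1, hd2⟩, hd3⟩ := hd.exists_isLeast ⟨b, ⟨hx.2.le, le_rfl⟩, hb⟩
  have hcx : c < x := hc1.2.lt_of_ne fun h => hfx (h ▸ hc2)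
  have hxd : x < d := hd1.1.lt_of_ne fun h => hfx (h ▸ hd2)
  refine ⟨c, d, hc1.1, hcx.trans hxd, hd1.2, hc2, hd2, fun y hy hfy => ?_⟩
  rcases le_total y x with h | h
  · exact absurd (hc3 ⟨⟨hc1.1.trans hy.1.le, h⟩, hfy⟩) (not_le.2 hy.1)
  · exact absurd (hd3 ⟨⟨h, hy.2.le.trans hd1.2⟩, hfy⟩) (not_le.2 hy.2)

/-- A nontrivial solution on `(0, 1)` which is continuous up to the boundary, vanishes there, and
whose square is Lipschitz. -/
structure IsPrincipalSol (V : ℝ → ℝ) (E M : ℝ) (f f' : ℝ → ℝ) : Prop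
    extends IsSchrodingerSol V E 0 1 f f' where
  continuousOn : ContinuousOn f (Icc 0 1)
  map_zero : f 0 = 0
  map_one : f 1 = 0
  exists_ne_zero : ∃ x ∈ Ioo (0 : ℝ) 1, f x ≠ 0
  abs_sq_sub_le : ∀ x ∈ Icc (0 : ℝ) 1, ∀ y ∈ Icc (0 : ℝ) 1, x ≤ y →
    |f y ^ 2 - f x ^ 2| ≤ M * (y - x)

namespace IsPrincipalSol

variable {V : ℝ → ℝ} {E F M a b : ℝ} {f f' u u' : ℝ → ℝ}

theorem exists_nodal_interval (hf : IsPrincipalSol V E M f f') (hV : ContinuousOn V (Ioo 0 1))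
    (ha : 0 ≤ a) (hab : a < b) (hb : b ≤ 1) (hfa : f a = 0) (hfb : f b = 0) :
    ∃ c d, a ≤ c ∧ c < d ∧ d ≤ b ∧ (∀ y ∈ Ioo c d, f y ≠ 0) ∧
      (∀ y ∈ Ioo c d, f y ^ 2 ≤ M * (y - c)) ∧ ∀ y ∈ Ioo c d, f y ^ 2 ≤ M * (d - y) := by
  have hne : ∃ x ∈ Ioo a b, f x ≠ 0 := by
    by_contra! h
    obtain ⟨p, hp⟩ := exists_between hab
    have hp' : p ∈ Ioo (0 : ℝ) 1 := ⟨ha.trans_lt hp.1, hp.2.trans_le hb⟩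
    have h0 : HasDerivAt f 0 p := (hasDerivAt_const p (0 : ℝ)).congr_of_eventuallyEq
      (by filter_upwards [isOpen_Ioo.mem_nhds hp] with y hy using h y hy)
    obtain ⟨x, hx, hfx⟩ := hf.exists_ne_zero
    exact hfx (hf.eq_zero_of_initial hV hp' (h p hp) ((hf.hasDerivAt p hp').unique h0) x hx)
  obtain ⟨x, hx, hfx⟩ := hne
  obtain ⟨c, d, hac, hcd, hdb, hc, hd, hcd0⟩ := exists_consecutive_zeros
    (hf.continuousOn.mono (Icc_subset_Icc ha hb)) hfa hfb hx hfx
  refine ⟨c, d, hac, hcd, hdb, hcd0, fun y hy => ?_, fun y hy => ?_⟩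
  · have h := hf.abs_sq_sub_le c ⟨ha.trans hac, hcd.le.trans (hdb.trans hb)⟩ y
      ⟨(ha.trans hac).trans hy.1.le, hy.2.le.trans (hdb.trans hb)⟩ hy.1.le
    rw [hc] at h
    linarith [(abs_le.1 h).2]
  · have h := hf.abs_sq_sub_le y ⟨(ha.trans hac).trans hy.1.le, hy.2.le.trans (hdb.trans hb)⟩ d
      ⟨(ha.trans hac).trans hcd.le, hdb.trans hb⟩ hy.2.le
    rw [hd] at h
    linarith [(abs_le.1 h).1]

theorem exists_zero_Ioo (hf : IsPrincipalSol V E M f f') (hV : ContinuousOn V (Ioo 0 1))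
    (hu : IsSchrodingerSol V F 0 1 u u') (hEF : E < F)
    (ha : 0 ≤ a) (hab : a < b) (hb : b ≤ 1) (hfa : f a = 0) (hfb : f b = 0) :
    ∃ x ∈ Ioo a b, u x = 0 := by
  obtain ⟨c, d, hac, hcd, hdb, h0, h1, h2⟩ := hf.exists_nodal_interval hV ha hab hb hfa hfb
  obtain ⟨x, hx, hux⟩ := (hf.toIsSchrodingerSol.mono (ha.trans hac)
    (hdb.trans hb)).exists_zero_Ioo_of_lt (hu.mono (ha.trans hac) (hdb.trans hb)) hcd hEF h0 h1 h2
  exact ⟨x, Ioo_subset_Ioo hac hdb hx, hux⟩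

theorem exists_zero_Ioc (hf : IsPrincipalSol V E M f f') (hV : ContinuousOn V (Ioo 0 1))
    (hu : IsSchrodingerSol V F 0 1 u u') (hEF : E ≤ F) (hucont : ∀ x, 0 < x → ContinuousAt u x)
    (ha : 0 ≤ a) (hab : a < b) (hb : b ≤ 1) (hfa : f a = 0) (hfb : f b = 0) :
    ∃ x ∈ Ioc a b, u x = 0 := by
  obtain ⟨c, d, hac, hcd, hdb, h0, h1, h2⟩ := hf.exists_nodal_interval hV ha hab hb hfa hfb
  obtain ⟨x, hx, hux⟩ := (hf.toIsSchrodingerSol.mono (ha.trans hac)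
    (hdb.trans hb)).exists_zero_Ioc (hu.mono (ha.trans hac) (hdb.trans hb)) hcd hEF h0 h1 h2
      (hucont d ((ha.trans hac).trans_lt hcd))
  exact ⟨x, Ioc_subset_Ioc hac hdb hx, hux⟩

/-- The `j`-th eigenfunction has at least `j` zeros in `(0, 1)`. -/
theorem exists_zeros (hV : ContinuousOn V (Ioo 0 1)) {lam : ℕ → ℝ} (hlam : StrictMono lam)
    (hsol : ∀ j, ∃ f f' M, IsPrincipalSol V (lam j) M f f') (j : ℕ) :
    ∀ f f' M, IsPrincipalSol V (lam j) M f f' →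
      ∃ z : ℕ → ℝ, (∀ i ≤ j + 1, z i ∈ Icc (0 : ℝ) 1) ∧ (∀ i ≤ j, z i < z (i + 1)) ∧
        z (j + 1) = 1 ∧ ∀ i ≤ j + 1, f (z i) = 0 := by
  induction j with
  | zero =>
    intro f f' M hf
    refine ⟨fun i => i, ?_, ?_, ?_, ?_⟩
    · intro i hi
      have : (i : ℝ) ≤ 1 := by exact_mod_cast hi
      exact ⟨Nat.cast_nonneg i, this⟩
    · intro i _
      simp
    · simp
    · intro i hi
      interval_cases i
      · simpa using hf.map_zero
      · simpa using hf.map_one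
  | succ j ih =>
    intro u u' M hu
    obtain ⟨f, f', M', hf⟩ := hsol j
    obtain ⟨z, hz01, hzlt, hz1, hfz⟩ := ih f f' M' hf
    have hw : ∀ i, ∃ w, i ≤ j → w ∈ Ioo (z i) (z (i + 1)) ∧ u w = 0 := by
      intro i
      by_cases hi : i ≤ j
      · obtain ⟨w, hw⟩ := hf.exists_zero_Ioo hV hu.toIsSchrodingerSol (hlam j.lt_succ_self)
          (hz01 i (by omega)).1 (hzlt i hi) (hz01 (i + 1) (by omega)).2 (hfz i (by omega))
          (hfz (i + 1) (by omega))
        exact ⟨w, fun _ => hw⟩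
      · exact ⟨0, fun h => absurd h hi⟩
    choose w hw using hw
    let y : ℕ → ℝ := fun i => if i = 0 then 0 else if i ≤ j + 1 then w (i - 1) else 1
    have hy0 : y 0 = 0 := rfl
    have hy1 : ∀ i ≤ j, y (i + 1) = w i := fun i hi => by simp [y, hi]
    have hy2 : y (j + 1 + 1) = 1 := by simp [y]
    refine ⟨y, ?_, ?_, hy2, ?_⟩
    · rintro (_ | i) hi
      · simp [hy0]
      · rcases Nat.lt_or_ge j i with h | h
        · obtain rfl : i = j + 1 := by omega
          simp [hy2]
        · rw [hy1 i h]
          exact ⟨(hz01 i (by omega)).1.trans (hw i h).1.1.le,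
            (hw i h).1.2.le.trans (hz01 (i + 1) (by omega)).2⟩
    · rintro (_ | i) hi
      · rw [hy0, hy1 0 (Nat.zero_le _)]
        exact (hz01 0 (by omega)).1.trans_lt (hw 0 (Nat.zero_le _)).1.1
      · rw [hy1 i (by omega)]
        rcases Nat.lt_or_ge j (i + 1) with h | h
        · obtain rfl : i = j := by omega
          rw [hy2, ← hz1]
          exact (hw i le_rfl).1.2
        · rw [hy1 (i + 1) h]
          exact (hw i (by omega)).1.2.trans (hw (i + 1) h).1.1
    · rintro (_ | i) hi
      · rw [hy0, hu.map_zero]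
      · rcases Nat.lt_or_ge j i with h | h
        · obtain rfl : i = j + 1 := by omega
          rw [hy2, hu.map_one]
        · rw [hy1 i h]
          exact (hw i h).2

end IsPrincipalSol

theorem IsEigenvalueGxi.exists_isPrincipalSol {ν ξ E : ℝ} (h : IsEigenvalueGxi ν ξ E) :
    ∃ f f' M, IsPrincipalSol (fun x => ξ ^ 2 * x ^ 2 + (ν ^ 2 - 1/4) / x ^ 2) E M f f' := by
  obtain ⟨f, hne, hd1, hd2, hode, hlim0, hlim1, hint⟩ := h
  have hcont : ContinuousOn f (Ioo 0 1) :=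
    fun x hx => (hd1 x hx).continuousAt.continuousWithinAt
  have hlim0' := hlim0
  have hlim1' := hlim1
  rw [nhdsWithin_Ioo_eq_nhdsGT one_pos] at hlim0'
  rw [nhdsWithin_Ioo_eq_nhdsLT one_pos] at hlim1'
  set g := extendFrom (Ioo (0 : ℝ) 1) f with hg
  have hgcont : ContinuousOn g (Icc 0 1) :=
    continuousOn_Icc_extendFrom_Ioo hcont hlim0' hlim1'
  have hg0 : g 0 = 0 := eq_lim_at_left_extendFrom_Ioo one_pos hlim0'
  have hg1 : g 1 = 0 := eq_lim_at_right_extendFrom_Ioo one_pos hlim1'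
  have hgf : ∀ x ∈ Ioo (0 : ℝ) 1, g x = f x := fun x hx =>
    extendFrom_eq (subset_closure hx) (hcont x hx)
  have hgd : ∀ x ∈ Ioo (0 : ℝ) 1, HasDerivAt g (deriv f x) x := fun x hx =>
    (hd1 x hx).hasDerivAt.congr_of_eventuallyEq
      (by filter_upwards [isOpen_Ioo.mem_nhds hx] with y hy using hgf y hy)
  have hfd2 : ∀ x ∈ Ioo (0 : ℝ) 1, HasDerivAt (deriv f)
      ((ξ ^ 2 * x ^ 2 + (ν ^ 2 - 1/4) / x ^ 2 - E) * f x) x := fun x hx =>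
    (hd2 x hx).hasDerivAt.congr_deriv (by linarith [hode x hx])
  set H : ℝ → ℝ := fun x =>
    (deriv f x ^ 2 + (ξ ^ 2 * x ^ 2 + (ν ^ 2 - 1/4) / x ^ 2) * f x ^ 2) - E * f x ^ 2 with hH
  have hHint : IntegrableOn H (Ioo 0 1) := by
    refine hint.sub (Integrable.const_mul ?_ E)
    have h1 : IntegrableOn (fun x => g x ^ 2) (Ioo 0 1) :=
      ((hgcont.pow 2).integrableOn_compact isCompact_Icc).mono_set Ioo_subset_Icc_self
    exact h1.congr_fun (fun x hx => by simp only [hgf x hx]) measurableSet_Ioo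
  have hprod : ∀ x ∈ Ioo (0 : ℝ) 1, HasDerivAt (fun x => f x * deriv f x) (H x) x := fun x hx =>
    ((hd1 x hx).hasDerivAt.mul (hfd2 x hx)).congr_deriv (by simp only [hH]; ring)
  have hhalf : (1 / 2 : ℝ) ∈ Ioo (0 : ℝ) 1 := by constructor <;> norm_num
  set K := |f (1 / 2) * deriv f (1 / 2)| + ∫ x in Ioo (0 : ℝ) 1, ‖H x‖ with hK
  have hbound : ∀ x ∈ Ioo (0 : ℝ) 1, |f x * deriv f x| ≤ K := by
    intro x hx
    have hsub : uIcc (1 / 2) x ⊆ Ioo (0 : ℝ) 1 := (ordConnected_Ioo).uIcc_subset hhalf hx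
    have h1 := intervalIntegral.integral_eq_sub_of_hasDerivAt
      (fun y hy => hprod y (hsub hy))
      ((hHint.mono_set hsub).intervalIntegrable)
    have h2 : ‖∫ y in (1 / 2)..x, H y‖ ≤ ∫ x in Ioo (0 : ℝ) 1, ‖H x‖ :=
      intervalIntegral.norm_integral_le_integral_norm_uIoc.trans
        (setIntegral_mono_set hHint.norm (ae_of_all _ fun _ => norm_nonneg _)
          (uIoc_subset_uIcc.trans hsub).eventuallyLE)
    rw [h1, Real.norm_eq_abs] at h2
    have h3 := abs_sub_abs_le_abs_sub (f x * deriv f x) (f (1 / 2) * deriv f (1 / 2))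
    linarith
  have hsq : ∀ x ∈ Ioo (0 : ℝ) 1, HasDerivAt (fun x => g x ^ 2) (2 * (f x * deriv f x)) x :=
    fun x hx => ((hgd x hx).pow 2).congr_deriv (by rw [hgf x hx]; push_cast; ring)
  refine ⟨g, deriv f, 2 * K, ⟨hgd, fun x hx => by rw [hgf x hx]; exact hfd2 x hx⟩, hgcont, hg0, hg1,
    ?_, ?_⟩
  · obtain ⟨x, hx, hfx⟩ := hne
    exact ⟨x, hx, by rwa [hgf x hx]⟩
  · intro x hx y hy hxy
    have hm : ∀ s : ℝ, |s| ≤ 1 →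
        MonotoneOn (fun x => 2 * K * x + s * g x ^ 2) (Icc (0 : ℝ) 1) := by
      intro s hs
      have hd : ∀ x ∈ Ioo (0 : ℝ) 1, HasDerivAt (fun x => 2 * K * x + s * g x ^ 2)
          (2 * K + s * (2 * (f x * deriv f x))) x := fun x hx =>
        HasDerivAt.congr_deriv
          (((hasDerivAt_id x).const_mul (2 * K)).add ((hsq x hx).const_mul s)) (by ring)
      refine monotoneOn_of_deriv_nonneg (convex_Icc 0 1) (by fun_prop) ?_ ?_
      · rw [interior_Icc]
        exact fun x hx => (hd x hx).differentiableAt.differentiableWithinAt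
      · rw [interior_Icc]
        intro x hx
        rw [(hd x hx).deriv]
        have h1 : |s * (f x * deriv f x)| ≤ 1 * K := by
          rw [abs_mul]
          exact mul_le_mul hs (hbound x hx) (abs_nonneg _) zero_le_one
        linarith [(abs_le.1 h1).1]
    have h1 := hm 1 (by simp) hx hy hxy
    have h2 := hm (-1) (by simp) hx hy hxy
    simp only at h1 h2
    rw [abs_le]
    constructor <;> linarith

open Polynomial in
/-- Existence of generalized Laguerre polynomials, as solutions of Laguerre's equation. -/
theorem exists_laguerre (ν : ℝ) (hν : 0 ≤ ν) (k : ℕ) :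
    ∃ P : ℝ[X], P ≠ 0 ∧ P.natDegree ≤ k ∧
      X * derivative (derivative P) + (C (ν + 1) - X) * derivative P + C (k : ℝ) * P = 0 := by
  let c : ℕ → ℝ := fun n => Nat.rec 1 (fun j r => ((j : ℝ) - k) / ((j + 1) * (j + 1 + ν)) * r) n
  have hc0 : c 0 = 1 := rfl
  have hc : ∀ j, (j + 1) * (j + 1 + ν) * c (j + 1) = ((j : ℝ) - k) * c j := by
    intro j
    have h1 : c (j + 1) = ((j : ℝ) - k) / ((j + 1) * (j + 1 + ν)) * c j := rfl
    have h2 : (j + 1 : ℝ) ≠ 0 := by positivity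
    have h3 : (j + 1 + ν : ℝ) ≠ 0 := by positivity
    rw [h1]
    field_simp
  have hck : ∀ m, c (k + 1 + m) = 0 := by
    intro m
    induction m with
    | zero =>
      have h := hc k
      rw [sub_self, zero_mul] at h
      have h2 : (k + 1 : ℝ) * (k + 1 + ν) ≠ 0 := by positivity
      exact (mul_eq_zero.1 h).resolve_left h2
    | succ m ih =>
      have h := hc (k + 1 + m)
      rw [ih, mul_zero] at h
      have h2 : (((k + 1 + m : ℕ) : ℝ) + 1) * (((k + 1 + m : ℕ) : ℝ) + 1 + ν) ≠ 0 := by positivity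
      exact (mul_eq_zero.1 h).resolve_left h2
  let P : ℝ[X] := ∑ j ∈ Finset.range (k + 1), monomial j (c j)
  have hcoeff : ∀ n, P.coeff n = c n := by
    intro n
    simp only [P, finsetSum_coeff, coeff_monomial]
    rw [Finset.sum_ite_eq' (Finset.range (k + 1)) n c]
    split_ifs with h
    · rfl
    · obtain ⟨m, rfl⟩ := Nat.exists_eq_add_of_le (not_lt.1 (fun h' => h (Finset.mem_range.2 h')))
      exact (hck m).symm
  refine ⟨P, fun h => ?_, ?_, ?_⟩
  · have := hcoeff 0
    rw [h, hc0] at this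
    simp at this
  · refine natDegree_le_iff_coeff_eq_zero.2 fun n hn => ?_
    obtain ⟨m, rfl⟩ := Nat.exists_eq_add_of_le (Nat.succ_le_of_lt hn)
    rw [hcoeff]
    exact hck m
  · ext n
    rcases n with _ | n
    · have h := hc 0
      simp [sub_mul, coeff_derivative, hcoeff] at h ⊢
      linarith
    · have h := hc (n + 1)
      simp only [sub_mul, coeff_add, coeff_sub, coeff_X_mul, coeff_C_mul, coeff_derivative, hcoeff,
        coeff_zero]
      push_cast at h ⊢
      linarith

open Polynomial in
/-- `x ^ (ν + 1/2) * exp (-ξ x² / 2) * L (ξ x²)`, with `L` a generalized Laguerre polynomial, solves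
the eigenvalue equation on `(0, ∞)`. -/
theorem exists_oscillator_sol (ν ξ : ℝ) (hν : 0 ≤ ν) (k : ℕ) :
    ∃ (u u' : ℝ → ℝ) (P : ℝ[X]), P ≠ 0 ∧ P.natDegree ≤ k ∧
      (∀ x, 0 < x → HasDerivAt u (u' x) x) ∧
      (∀ x, 0 < x → HasDerivAt u'
        ((ξ ^ 2 * x ^ 2 + (ν ^ 2 - 1/4) / x ^ 2 - ξ * (4 * k + 2 * (1 + ν))) * u x) x) ∧
      ∀ x, 0 < x → u x = 0 → P.eval (ξ * x ^ 2) = 0 := by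
  obtain ⟨P, hP0, hPdeg, hP⟩ := exists_laguerre ν hν k
  set A : ℝ → ℝ := fun x => x ^ (ν + 1 / 2) * Real.exp (-(ξ * x ^ 2 / 2)) with hA
  have hApos : ∀ x, 0 < x → 0 < A x := fun x hx =>
    mul_pos (Real.rpow_pos_of_pos hx _) (Real.exp_pos _)
  have hAd : ∀ x, 0 < x → HasDerivAt A (((ν + 1 / 2) / x - ξ * x) * A x) x := by
    intro x hx
    have h1 := Real.hasDerivAt_rpow_const (x := x) (p := ν + 1 / 2) (Or.inl hx.ne')
    have h2 : HasDerivAt (fun x : ℝ => -(ξ * x ^ 2 / 2)) (-(ξ * x)) x :=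
      HasDerivAt.congr_deriv ((((hasDerivAt_pow 2 x).const_mul ξ).div_const 2).neg)
        (by push_cast; ring)
    refine (h1.mul h2.exp).congr_deriv ?_
    rw [Real.rpow_sub_one hx.ne']
    simp only [hA]
    field_simp
    ring
  have hcomp : ∀ (Q : ℝ[X]) (x : ℝ),
      HasDerivAt (fun x => Q.eval (ξ * x ^ 2)) (2 * ξ * x * (derivative Q).eval (ξ * x ^ 2)) x := by
    intro Q x
    have h2 : HasDerivAt (fun x : ℝ => ξ * x ^ 2) (2 * ξ * x) x :=
      HasDerivAt.congr_deriv ((hasDerivAt_pow 2 x).const_mul ξ) (by push_cast; ring)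
    have h3 := (Q.hasDerivAt (ξ * x ^ 2)).comp x h2
    rw [mul_comm]
    exact h3
  refine ⟨fun x => A x * P.eval (ξ * x ^ 2), fun x => A x * (((ν + 1 / 2) / x - ξ * x) *
    P.eval (ξ * x ^ 2) + 2 * ξ * x * (derivative P).eval (ξ * x ^ 2)), P, hP0, hPdeg, ?_, ?_, ?_⟩
  · intro x hx
    exact ((hAd x hx).mul (hcomp P x)).congr_deriv (by ring)
  · intro x hx
    have hB : HasDerivAt (fun x : ℝ => (ν + 1 / 2) / x - ξ * x) (-(ν + 1 / 2) / x ^ 2 - ξ) x :=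
      HasDerivAt.congr_deriv (((hasDerivAt_const x (ν + 1 / 2)).div (hasDerivAt_id x) hx.ne').sub
        ((hasDerivAt_id x).const_mul ξ)) (by simp)
    have hC : HasDerivAt (fun x : ℝ => 2 * ξ * x) (2 * ξ) x := by
      simpa using (hasDerivAt_id x).const_mul (2 * ξ)
    have hode := congrArg (Polynomial.eval (ξ * x ^ 2)) hP
    simp only [eval_add, eval_mul, eval_sub, eval_X, eval_C, eval_zero] at hode
    refine ((hAd x hx).mul ((hB.mul (hcomp P x)).add
      (hC.mul (hcomp (derivative P) x)))).congr_deriv ?_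
    simp only [Pi.add_apply, Pi.mul_apply]
    set p := P.eval (ξ * x ^ 2)
    set p' := (derivative P).eval (ξ * x ^ 2)
    set p'' := (derivative (derivative P)).eval (ξ * x ^ 2)
    have hx0 := hx.ne'
    field_simp
    linear_combination 64 * x ^ 2 * A x * ξ * hode
  · intro x hx h
    exact (mul_eq_zero.1 h).resolve_left (hApos x hx).ne'

/-- Lower bound for the eigenvalues of `G_ξ`: if `(λ k)` is the increasing enumeration of
the eigenvalues of `G_ξ`, then `λ k / ξ > 4k + 2(1+ν)` for every `k`. -/
theorem eigenvalue_lower_bound (ν ξ : ℝ) (hν : 0 ≤ ν) (hξ : 0 < ξ)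
    (lam : ℕ → ℝ) (hmono : StrictMono lam)
    (heig : ∀ k, IsEigenvalueGxi ν ξ (lam k))
    (hall : ∀ E : ℝ, IsEigenvalueGxi ν ξ E → ∃ k, lam k = E) :
    ∀ k : ℕ, lam k / ξ > 4 * k + 2 * (1 + ν) := by
  intro k
  by_contra! hle
  rw [div_le_iff₀ hξ] at hle
  have hV : ContinuousOn (fun x : ℝ => ξ ^ 2 * x ^ 2 + (ν ^ 2 - 1/4) / x ^ 2) (Ioo 0 1) :=
    (by fun_prop : ContinuousOn (fun x : ℝ => ξ ^ 2 * x ^ 2) (Ioo 0 1)).add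
      (continuousOn_const.div (by fun_prop) fun x hx => pow_ne_zero 2 hx.1.ne')
  have hsol := fun j => (heig j).exists_isPrincipalSol
  obtain ⟨f, f', M, hf⟩ := hsol k
  obtain ⟨z, hz01, hzlt, -, hfz⟩ := IsPrincipalSol.exists_zeros hV hmono hsol k f f' M hf
  obtain ⟨u, u', P, hP0, hPdeg, hu, hu', huP⟩ := exists_oscillator_sol ν ξ hν k
  have hw : ∀ i, ∃ w, i ≤ k → w ∈ Ioc (z i) (z (i + 1)) ∧ u w = 0 := by
    intro i
    by_cases hi : i ≤ k
    · obtain ⟨w, hw⟩ := hf.exists_zero_Ioc hV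
        ⟨fun x hx => hu x hx.1, fun x hx => hu' x hx.1⟩ (by linarith)
        (fun x hx => (hu x hx).continuousAt)
        (hz01 i (by omega)).1 (hzlt i hi) (hz01 (i + 1) (by omega)).2 (hfz i (by omega))
        (hfz (i + 1) (by omega))
      exact ⟨w, fun _ => hw⟩
    · exact ⟨0, fun h => absurd h hi⟩
  choose w hw using hw
  have hwpos : ∀ i ≤ k, 0 < w i := fun i hi =>
    (hz01 i (by omega)).1.trans_lt (hw i hi).1.1
  have hwlt : ∀ i j, i < j → j ≤ k → w i < w j := by
    intro i j hij
    induction j, hij using Nat.le_induction with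
    | base => exact fun h => (hw i (by omega)).1.2.trans_lt (hw (i + 1) h).1.1
    | succ j hj ih =>
      exact fun h => (ih (by omega)).trans
        ((hw j (by omega)).1.2.trans_lt (hw (j + 1) h).1.1)
  have hinj : InjOn (fun i => ξ * w i ^ 2) (Finset.range (k + 1) : Set ℕ) := by
    intro i hi j hj hij
    simp only [Finset.coe_range, mem_Iio] at hi hj
    have h1 : w i = w j := by
      have h2 := mul_left_cancel₀ hξ.ne' hij
      exact (pow_left_inj₀ (hwpos i (by omega)).le (hwpos j (by omega)).le two_ne_zero).1 h2
    rcases lt_trichotomy i j with h | h | h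
    · exact absurd h1 (hwlt i j h (by omega)).ne
    · exact h
    · exact absurd h1 (hwlt j i h (by omega)).ne'
  have hcard := P.card_le_degree_of_subset_roots
    (Z := (Finset.range (k + 1)).image fun i => ξ * w i ^ 2) (by
      intro t ht
      rw [Finset.mem_val] at ht
      obtain ⟨i, hi, rfl⟩ := Finset.mem_image.1 ht
      have hi' : i ≤ k := Nat.lt_succ_iff.1 (Finset.mem_range.1 hi)
      exact (Polynomial.mem_roots hP0).2 (huP _ (hwpos i hi') (hw i hi').2))
  rw [Finset.card_image_of_injOn hinj, Finset.card_range] at hcard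
  omega
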